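/- Let Ω ⊆ ℂ be a domain (open connected set) and let f : Ω → ℂ be a non-constant holomorphic function on Ω. Then for every compact set E ⊆ Ω, dim_N E = dim_N f(E) (with the Euclidean metric). -/

import Mathlib

open Set Metric

/-- `S` is `D`-bounded with respect to the distance function `d`:
every two points of `S` are at distance at most `D`. -/
def IsBoundedBy {α : Type*} (d : α → α → ℝ) (S : Set α) (D : ℝ) : Prop :=
  ∀ x ∈ S, ∀ y ∈ S, d x y ≤ D

/-- The Nagata (Assouad–Nagata) dimension of the set `X ⊆ α` with respect to the
distance function `d`, as an element of `ℕ∞`: the infimum of all `n : ℕ` such that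
there is a constant `c > 0` so that for every `s > 0` the set `X` admits a cover by
subsets of diameter at most `c * s` such that every subset of `X` of diameter at
most `s` meets at most `n + 1` members of the cover. -/
noncomputable def nagataDimWith {α : Type*} (d : α → α → ℝ) (X : Set α) : ℕ∞ :=
  sInf {N : ℕ∞ | ∃ n : ℕ, N = (n : ℕ∞) ∧ ∃ c : ℝ, 0 < c ∧ ∀ s : ℝ, 0 < s →
    ∃ B : Set (Set α), (∀ b ∈ B, b ⊆ X) ∧ X ⊆ ⋃₀ B ∧
      (∀ b ∈ B, IsBoundedBy d b (c * s)) ∧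
      ∀ T ⊆ X, IsBoundedBy d T s → {b ∈ B | (T ∩ b).Nonempty}.encard ≤ (n : ℕ∞) + 1}

/-- The Nagata dimension of a subset of a metric space. -/
noncomputable def nagataDim {α : Type*} [PseudoMetricSpace α] (X : Set α) : ℕ∞ :=
  nagataDimWith dist X

/-! The Nagata dimension of `A` is at most `n` iff, with some constant `c` and at every scale `s`,
the set `A` has a coloring by `n + 1` colors whose classes split into pieces of diameter at most
`c * s` that are more than `s` apart. In this form the dimension of a finite union is the maximum of
the dimensions of its members, so that by compactness it suffices to compare `dist x y` with
`dist (f x) (f y)` near each point `z`, and even on finitely many thin sectors with apex `z`.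

As `f` is not constant near `z`, it behaves like `w ↦ f z + (w - z) ^ (m + 1) • a` there, with
`a ≠ 0`. On a thin sector `f` is injective, and on the part at distance about `r` from `z` it is a
similarity of ratio `r ^ m`, up to constants. This distortion is not uniform in `r`, but rescaling
leaves the constant of a coloring unchanged, and colorings of every other dyadic annulus about `z`
glue together without increasing `n`. -/

open scoped Topology

variable {ι ι' κ σ X Y : Type*} [PseudoMetricSpace X] [PseudoMetricSpace Y]

section Coloring

/-- A coloring of `A` at scale `s` in the sense of Nagata and Assouad: each color class splits
into pieces of diameter at most `D` which are more than `s` apart. The pieces are the classes of an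
equivalence relation, and distances are measured along `g`, so that two metrics on the same set
can be compared. -/
def IsScaleColoring (col : ι → κ) (s D : ℝ) (g : ι → X) (A : Set ι) : Prop :=
  ∃ r : Setoid ι, ∀ x ∈ A, ∀ y ∈ A, col x = col y →
    (dist (g x) (g y) ≤ s → r x y) ∧ (r x y → dist (g x) (g y) ≤ D)

/-- The coloring form of the assertion that the Nagata dimension of `g '' A` is at most `n`. -/
def LinearlyColorable (n : ℕ) (g : ι → X) (A : Set ι) : Prop :=
  ∃ c : ℝ, 0 < c ∧ ∀ s : ℝ, 0 < s → ∃ col : ι → Fin (n + 1), IsScaleColoring col s (c * s) g A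

variable {n : ℕ} {s s' D D' : ℝ} {g : ι → X} {g' : ι' → Y} {A B : Set ι} {A' : Set ι'}

namespace IsScaleColoring

lemma comap {col : ι → κ} {col' : ι' → κ} (h : IsScaleColoring col s D g A) (p : ι' → ι)
    (hp : MapsTo p A' A) (hcol : ∀ x ∈ A', col' x = col (p x))
    (hs : ∀ x ∈ A', ∀ y ∈ A', dist (g' x) (g' y) ≤ s' → dist (g (p x)) (g (p y)) ≤ s)
    (hD : ∀ x ∈ A', ∀ y ∈ A', dist (g (p x)) (g (p y)) ≤ D → dist (g' x) (g' y) ≤ D') :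
    IsScaleColoring col' s' D' g' A' := by
  obtain ⟨r, hr⟩ := h
  refine ⟨r.comap p, fun x hx y hy hxy => ?_⟩
  rw [hcol x hx, hcol y hy] at hxy
  obtain ⟨hclose, hdiam⟩ := hr _ (hp hx) _ (hp hy) hxy
  exact ⟨fun h => hclose (hs x hx y hy h), fun h => hD x hx y hy (hdiam h)⟩

lemma mono {col : ι → κ} (h : IsScaleColoring col s D g B) (hAB : A ⊆ B) (hD : D ≤ D') :
    IsScaleColoring col s D' g A :=
  h.comap id hAB (fun _ _ => rfl) (fun _ _ _ _ h => h) (fun _ _ _ _ h => h.trans hD)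

lemma of_dist_le (col : ι → κ) (h : ∀ x ∈ A, ∀ y ∈ A, dist (g x) (g y) ≤ D) :
    IsScaleColoring col s D g A :=
  ⟨⊤, fun x hx y hy _ => ⟨fun _ => trivial, fun _ => h x hx y hy⟩⟩

lemma of_fibers {col : ι → κ} (j : ι → σ)
    (hfib : ∀ i, IsScaleColoring col s D g {x ∈ A | j x = i})
    (hsep : ∀ x ∈ A, ∀ y ∈ A, col x = col y → dist (g x) (g y) ≤ s → j x = j y) :
    IsScaleColoring col s D g A := by
  choose r hr using hfib
  let R : Setoid ι :=
    { r := fun x y => j x = j y ∧ r (j x) x y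
      iseqv :=
        { refl := fun x => ⟨rfl, (r _).refl' x⟩
          symm := fun ⟨hj, h⟩ => ⟨hj.symm, hj ▸ (r _).symm' h⟩
          trans := fun ⟨hj, h⟩ ⟨hj', h'⟩ => ⟨hj.trans hj', (r _).trans' h (hj ▸ h')⟩ } }
  refine ⟨R, fun x hx y hy hxy => ⟨fun hd => ?_, fun ⟨hj, h⟩ => ?_⟩⟩
  · have hj := hsep x hx y hy hxy hd
    exact ⟨hj, (hr (j x) x ⟨hx, rfl⟩ y ⟨hy, hj.symm⟩ hxy).1 hd⟩
  · exact (hr (j x) x ⟨hx, rfl⟩ y ⟨hy, hj.symm⟩ hxy).2 h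

lemma union_of_separated {col : ι → κ} (hA : IsScaleColoring col s D g A)
    (hB : IsScaleColoring col s D g B)
    (hsep : ∀ x ∈ A, ∀ y ∈ B, col x = col y → s < dist (g x) (g y)) :
    IsScaleColoring col s D g (A ∪ B) := by
  refine of_fibers (· ∈ B) (fun i => ?_) (fun x hx y hy hxy hd => propext ⟨fun hxB => ?_,
    fun hyB => ?_⟩)
  · by_cases hi : i
    · exact hB.mono (fun x hx => hx.2.mpr hi) le_rfl
    · exact hA.mono (fun x hx => hx.1.resolve_right fun hxB => hi (hx.2.mp hxB)) le_rfl
  · by_contra hyB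
    rw [dist_comm] at hd
    exact (hsep y (hy.resolve_right hyB) x hxB hxy.symm).not_ge hd
  · by_contra hxB
    exact (hsep x (hx.resolve_right hxB) y hyB hxy).not_ge hd

lemma of_retraction {col col' : ι → κ} {δ : ℝ}
    (h : IsScaleColoring col (s + 2 * δ) D g B) (p : ι → ι) (hp : MapsTo p A B)
    (hcol : ∀ x ∈ A, col' x = col (p x)) (hδ : ∀ x ∈ A, dist (g x) (g (p x)) ≤ δ) :
    IsScaleColoring col' s (D + 2 * δ) g A := by
  refine h.comap p hp hcol (fun x hx y hy hd => ?_) (fun x hx y hy hd => ?_)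
  · have := dist_triangle4_left (g x) (g y) (g (p x)) (g (p y))
    linarith [hδ x hx, hδ y hy]
  · have := dist_triangle4_right (g x) (g y) (g (p x)) (g (p y))
    linarith [hδ x hx, hδ y hy]

-- Pieces of `A` that come within `s` of a point of `B` of their own color are absorbed into `B`;
-- the pieces that remain are far from everything of the same color.
lemma exists_union {colA colB : ι → κ} {DA DB : ℝ} (hs : 0 ≤ s) (hDA : 0 ≤ DA) (hDB : 0 ≤ DB)
    (hA : IsScaleColoring colA s DA g A)
    (hB : IsScaleColoring colB (s + 2 * (s + DA)) DB g B) :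
    ∃ col : ι → κ, IsScaleColoring col s (DB + 2 * (s + DA)) g (A ∪ B) := by
  classical
  obtain ⟨r, hr⟩ := id hA
  let P : Set ι := {x ∈ A | ∃ a ∈ A, ∃ b ∈ B,
    colA a = colA x ∧ r a x ∧ dist (g a) (g b) ≤ s ∧ colB b = colA x}
  let col : ι → κ := fun x => if x ∈ B then colB x else colA x
  have hcolB : ∀ x ∈ B, col x = colB x := fun x hx => if_pos hx
  have hcolA : ∀ x ∉ B, col x = colA x := fun x hx => if_neg hx
  have hretract : ∀ x ∈ P ∪ B, ∃ b ∈ B, col x = colB b ∧ dist (g x) (g b) ≤ s + DA := by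
    intro x hx
    by_cases hxB : x ∈ B
    · exact ⟨x, hxB, hcolB x hxB, by rw [dist_self]; positivity⟩
    obtain ⟨hxA, a, ha, b, hb, hax, hrax, hab, hbx⟩ := hx.resolve_right hxB
    refine ⟨b, hb, (hcolA x hxB).trans hbx.symm, ?_⟩
    linarith [dist_triangle_left (g x) (g b) (g a), (hr a ha x hxA hax).2 hrax]
  choose! p hpB hpcol hpdist using hretract
  have habsorbed : IsScaleColoring col s (DB + 2 * (s + DA)) g (P ∪ B) :=
    hB.of_retraction p hpB hpcol hpdist
  have hrest : IsScaleColoring col s (DB + 2 * (s + DA)) g (A \ (P ∪ B)) :=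
    hA.comap id (fun x hx => hx.1) (fun x hx => hcolA x fun hxB => hx.2 (Or.inr hxB))
      (fun _ _ _ _ h => h) (fun x _ y _ h => by dsimp only [id] at h; linarith)
  refine ⟨col, (hrest.union_of_separated habsorbed fun x ⟨hxA, hx⟩ y hy hxy => ?_).mono
    (fun x hx => ?_) le_rfl⟩
  · by_contra! hd
    have hxP : x ∉ P := fun hxP => hx (Or.inl hxP)
    rw [hcolA x fun hxB => hx (Or.inr hxB)] at hxy
    by_cases hyB : y ∈ B
    · rw [hcolB y hyB] at hxy
      exact hxP ⟨hxA, x, hxA, y, hyB, rfl, r.refl' x, hd, hxy.symm⟩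
    · rw [hcolA y hyB] at hxy
      obtain ⟨hyA, a, ha, b, hb, hay, hray, hab, hby⟩ := hy.resolve_right hyB
      exact hxP ⟨hxA, a, ha, b, hb, hay.trans hxy.symm,
        r.trans' hray (r.symm' ((hr x hxA y hyA hxy).1 hd)), hab, hby.trans hxy.symm⟩
  · by_cases hx' : x ∈ P ∪ B
    · exact Or.inr hx'
    · exact Or.inl ⟨hx.resolve_right fun hxB => hx' (Or.inr hxB), hx'⟩

end IsScaleColoring

namespace LinearlyColorable

lemma of_subsingleton (n : ℕ) (g : ι → X) (hA : A.Subsingleton) : LinearlyColorable n g A :=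
  ⟨1, one_pos, fun s hs => ⟨fun _ => 0, .of_dist_le _ fun x hx y hy => by
    rw [hA hx hy, dist_self]; positivity⟩⟩

lemma mono (h : LinearlyColorable n g B) (hAB : A ⊆ B) : LinearlyColorable n g A := by
  obtain ⟨c, hc, h⟩ := h
  refine ⟨c, hc, fun s hs => ?_⟩
  obtain ⟨col, hcol⟩ := h s hs
  exact ⟨col, hcol.mono hAB le_rfl⟩

lemma union (hA : LinearlyColorable n g A) (hB : LinearlyColorable n g B) :
    LinearlyColorable n g (A ∪ B) := by
  obtain ⟨cA, hcA, hA⟩ := hA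
  obtain ⟨cB, hcB, hB⟩ := hB
  refine ⟨cB * (1 + 2 * (1 + cA)) + 2 * (1 + cA), by positivity, fun s hs => ?_⟩
  obtain ⟨colA, hA⟩ := hA s hs
  obtain ⟨colB, hB⟩ := hB (s + 2 * (s + cA * s)) (by positivity)
  obtain ⟨col, h⟩ := hA.exists_union hs.le (by positivity) (by positivity) hB
  exact ⟨col, h.mono Subset.rfl (by linarith)⟩

lemma image_iff {f : ι → X} : LinearlyColorable n id (f '' A) ↔ LinearlyColorable n f A := by
  classical
  refine exists_congr fun c => and_congr_right fun _ => forall₂_congr fun s _ => ⟨?_, ?_⟩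
  · rintro ⟨col, h⟩
    exact ⟨col ∘ f, h.comap f (mapsTo_image f A) (fun _ _ => rfl) (fun _ _ _ _ h => h)
      (fun _ _ _ _ h => h)⟩
  · rintro ⟨col, h⟩
    rcases A.eq_empty_or_nonempty with rfl | ⟨a, -⟩
    · exact ⟨fun _ => 0, .of_dist_le _ (by simp)⟩
    have : Nonempty ι := ⟨a⟩
    have hinv : ∀ y ∈ f '' A, f (Function.invFunOn f A y) = y := fun y hy =>
      Function.invFunOn_eq hy
    refine ⟨col ∘ Function.invFunOn f A, h.comap _ (fun y hy => Function.invFunOn_mem hy)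
      (fun _ _ => rfl) (fun x hx y hy h => ?_) (fun x hx y hy h => ?_)⟩
    · rwa [hinv x hx, hinv y hy]
    · rwa [hinv x hx, hinv y hy] at h

end LinearlyColorable

end Coloring

section Covers

variable {n : ℕ} {s D : ℝ} {A : Set X}

/-- The covers in the definition of the Nagata dimension, at a single scale: `B` covers `A` by
`D`-bounded subsets and has `s`-multiplicity at most `n + 1`. -/
def IsNagataCover (n : ℕ) (s D : ℝ) (A : Set X) (B : Set (Set X)) : Prop :=
  (∀ b ∈ B, b ⊆ A) ∧ A ⊆ ⋃₀ B ∧ (∀ b ∈ B, IsBoundedBy dist b D) ∧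
    ∀ T ⊆ A, IsBoundedBy dist T s → {b ∈ B | (T ∩ b).Nonempty}.encard ≤ (n : ℕ∞) + 1

lemma IsScaleColoring.exists_isNagataCover {col : X → Fin (n + 1)}
    (h : IsScaleColoring col s D id A) : ∃ B, IsNagataCover n s D A B := by
  obtain ⟨r, hr⟩ := h
  let piece : X → Set X := fun x => {y ∈ A | col y = col x ∧ r y x}
  refine ⟨piece '' A, ?_, fun x hx => ⟨piece x, mem_image_of_mem _ hx, hx, rfl, r.refl' x⟩, ?_, ?_⟩
  · rintro _ ⟨x, -, rfl⟩ y hy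
    exact hy.1
  · rintro _ ⟨x, -, rfl⟩ y ⟨hy, hcy, hyx⟩ z ⟨hz, hcz, hzx⟩
    exact (hr y hy z hz (hcy.trans hcz.symm)).2 (r.trans' hyx (r.symm' hzx))
  · intro T hTA hT
    let pieceOfColor : Fin (n + 1) → Set X := fun k =>
      {y ∈ A | col y = k ∧ ∃ t ∈ T, col t = k ∧ r y t}
    have hsub : {b ∈ piece '' A | (T ∩ b).Nonempty} ⊆ range pieceOfColor := by
      rintro _ ⟨⟨x, -, rfl⟩, t, htT, -, htx, hrtx⟩
      refine ⟨col x, Set.ext fun y => and_congr_right fun _ => and_congr_right fun _ => ?_⟩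
      constructor
      · rintro ⟨t', ht'T, ht'x, hyt'⟩
        have htt' := (hr t' (hTA ht'T) t (hTA htT) (ht'x.trans htx.symm)).1 (hT t' ht'T t htT)
        exact r.trans' (r.trans' hyt' htt') hrtx
      · exact fun hyx' => ⟨t, htT, htx, r.trans' hyx' (r.symm' hrtx)⟩
    calc _ ≤ (range pieceOfColor).encard := encard_le_encard hsub
      _ ≤ (univ : Set (Fin (n + 1))).encard := image_univ ▸ encard_image_le _ _
      _ = n + 1 := by simp

namespace IsNagataCover

variable {B : Set (Set X)}

lemma encard_inter_ball_le {ρ : ℝ} (h : IsNagataCover n (2 * ρ) D A B) (x : X) :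
    {b ∈ B | (A ∩ ball x ρ ∩ b).Nonempty}.encard ≤ (n : ℕ∞) + 1 := by
  refine h.2.2.2 _ inter_subset_left ?_
  rintro y ⟨-, hy⟩ z ⟨-, hz⟩
  linarith [dist_triangle_right y z x, mem_ball.1 hy, mem_ball.1 hz]

-- Otherwise each of the `n + 1` bands contributes a member of the cover within distance
-- `2 * (n + 1) * s` of `x`, and a member containing `x` is one too many.
lemma exists_band (h : IsNagataCover n (2 * ((n + 1) * (2 * s))) D A B) (hs : 0 < s) {x : X}
    (hx : x ∈ A) :
    ∃ i : Fin (n + 1), ∀ b ∈ B, infDist x b ∉ Ioo (i * (2 * s)) ((i + 1) * (2 * s)) := by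
  obtain ⟨hBA, hcov, -, -⟩ := id h
  by_contra! hcon
  choose β hβB hβ using hcon
  obtain ⟨t, htB, hxt⟩ := hcov hx
  have hβ_inj : Function.Injective β := by
    intro i i' hii'
    obtain ⟨h₁, h₂⟩ := hβ i
    obtain ⟨h₃, h₄⟩ := hβ i'
    rw [hii'] at h₁ h₂
    have hlt : (i : ℝ) < i' + 1 := lt_of_mul_lt_mul_right (h₁.trans h₄) (by positivity)
    have hlt' : (i' : ℝ) < i + 1 := lt_of_mul_lt_mul_right (h₃.trans h₂) (by positivity)
    norm_cast at hlt hlt'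
    omega
  have ht : t ∉ range β := by
    rintro ⟨i, rfl⟩
    have hpos := (hβ i).1
    rw [infDist_zero_of_mem hxt] at hpos
    exact absurd hpos (not_lt.2 (by positivity))
  have hnear : insert t (range β) ⊆
      {b ∈ B | (A ∩ ball x ((n + 1) * (2 * s)) ∩ b).Nonempty} := by
    rintro b (rfl | ⟨i, rfl⟩)
    · exact ⟨htB, x, ⟨hx, mem_ball_self (by positivity)⟩, hxt⟩
    · have hne : (β i).Nonempty := by
        by_contra! hempty
        have hpos := (hβ i).1
        rw [hempty, infDist_empty] at hpos
        exact absurd hpos (not_lt.2 (by positivity))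
      obtain ⟨y, hy, hxy⟩ := (infDist_lt_iff hne).1 (hβ i).2
      have hi : (i : ℝ) ≤ n := by exact_mod_cast Nat.lt_succ_iff.1 i.2
      exact ⟨hβB i, y, ⟨hBA _ (hβB i) hy, mem_ball'.2 (hxy.trans_le (by gcongr))⟩, hy⟩
  have hcard := (encard_le_encard hnear).trans (h.encard_inter_ball_le x)
  rw [encard_insert_of_notMem ht, ← image_univ, hβ_inj.encard_image] at hcard
  simp only [encard_univ, ENat.card_eq_coe_fintype_card, Fintype.card_fin] at hcard
  norm_cast at hcard
  omega

lemma exists_isScaleColoring (h : IsNagataCover n (2 * ((n + 1) * (2 * s))) D A B) (hs : 0 < s) :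
    ∃ col : X → Fin (n + 1), IsScaleColoring col s (D + (n + 1) * (2 * s)) id A := by
  choose! col hcol using fun x (hx : x ∈ A) => h.exists_band hs hx
  obtain ⟨-, hcov, hdiam, -⟩ := h
  let near : X → Set (Set X) := fun x => {b ∈ B | infDist x b ≤ col x * (2 * s)}
  refine ⟨col, Setoid.ker near, fun x hx y hy hxy => ⟨fun hd => ?_, fun hnear => ?_⟩⟩
  · have hsub : ∀ x, ∀ y ∈ A, col x = col y → dist x y ≤ s → near x ⊆ near y := by
      rintro x y hy hxy hd b ⟨hb, hxb⟩
      refine ⟨hb, not_lt.1 fun hlt => hcol y hy b hb ⟨hlt, ?_⟩⟩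
      rw [hxy] at hxb
      linarith [infDist_le_infDist_add_dist (x := y) (y := x) (s := b), dist_comm x y]
    exact (hsub x y hy hxy hd).antisymm (hsub y x hx hxy.symm (by rwa [dist_comm]))
  · obtain ⟨t, htB, hxt⟩ := hcov hx
    have htx : t ∈ near x := ⟨htB, by rw [infDist_zero_of_mem hxt]; positivity⟩
    obtain ⟨-, hyt⟩ : t ∈ near y := Setoid.ker_def.1 hnear ▸ htx
    have hlt : infDist y t < (n + 1) * (2 * s) := by
      have : (col y : ℝ) < n + 1 := by exact_mod_cast (col y).2
      exact hyt.trans_lt (by gcongr)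
    obtain ⟨q, hq, hyq⟩ := (infDist_lt_iff ⟨x, hxt⟩).1 hlt
    simp only [id]
    linarith [dist_triangle_right x y q, hdiam t htB x hxt q hq]

end IsNagataCover

lemma linearlyColorable_iff_exists_isNagataCover : LinearlyColorable n id A ↔
    ∃ c : ℝ, 0 < c ∧ ∀ s : ℝ, 0 < s → ∃ B, IsNagataCover n s (c * s) A B := by
  constructor
  · rintro ⟨c, hc, h⟩
    refine ⟨c, hc, fun s hs => ?_⟩
    obtain ⟨col, hcol⟩ := h s hs
    exact hcol.exists_isNagataCover
  · rintro ⟨c, hc, h⟩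
    refine ⟨c * (2 * ((n + 1) * 2)) + (n + 1) * 2, by positivity, fun s hs => ?_⟩
    obtain ⟨B, hB⟩ := h (2 * ((n + 1) * (2 * s))) (by positivity)
    obtain ⟨col, hcol⟩ := hB.exists_isScaleColoring hs
    exact ⟨col, hcol.mono Subset.rfl (by linarith)⟩

lemma nagataDim_eq_sInf (A : Set X) :
    nagataDim A = sInf {N : ℕ∞ | ∃ n : ℕ, N = n ∧ LinearlyColorable n id A} := by
  simp only [linearlyColorable_iff_exists_isNagataCover]
  rfl

lemma nagataDim_image (g : ι → X) (A : Set ι) :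
    nagataDim (g '' A) = sInf {N : ℕ∞ | ∃ n : ℕ, N = n ∧ LinearlyColorable n g A} := by
  simp only [nagataDim_eq_sInf, LinearlyColorable.image_iff]

end Covers

section Shells

variable [LinearOrder σ] {n : ℕ} {g : ι → X} {g' : ι → Y} {j : ι → σ} {A S T : Set ι}

/-- The levels of `j` are shells, at scales `R i`, for the metric on `S` pulled back along `g`: up
to the constant `K`, a point at level `i` is at distance at most `R i` from points of level at most
`i`, and at distance at least `R i` from points of lower level. -/
def IsShellDecomposition (j : ι → σ) (R : σ → ℝ) (K : ℝ) (g : ι → X) (S : Set ι) : Prop :=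
  Monotone R ∧ 0 < K ∧ ∀ x ∈ S, ∀ y ∈ S,
    (j x < j y → R (j y) ≤ dist (g x) (g y)) ∧ (j x ≤ j y → dist (g x) (g y) ≤ K * R (j y))

namespace IsShellDecomposition

variable {R : σ → ℝ} {K : ℝ}

lemma mono (h : IsShellDecomposition j R K g S) (hAS : A ⊆ S) : IsShellDecomposition j R K g A :=
  ⟨h.1, h.2.1, fun x hx y hy => h.2.2 x (hAS hx) y (hAS hy)⟩

lemma dist_le_mul {s : ℝ} (h : IsShellDecomposition j R K g S) {x y : ι} (hx : x ∈ S) (hy : y ∈ S)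
    (hxs : R (j x) ≤ s) (hys : R (j y) ≤ s) : dist (g x) (g y) ≤ K * s := by
  wlog hle : j x ≤ j y generalizing x y
  · exact dist_comm (g x) (g y) ▸ this hy hx hys hxs (le_of_not_ge hle)
  have hK := h.2.1
  calc dist (g x) (g y) ≤ K * R (j y) := (h.2.2 x hx y hy).2 hle
    _ ≤ K * s := by gcongr

-- At scale `s`, the shells with `R i ≤ s` together form one piece of diameter at most `K * s`, and
-- each of the other shells is more than `s` away from the rest.
lemma linearlyColorable (h : IsShellDecomposition j R K g A) {c : ℝ}
    (hshell : ∀ i, ∀ s > 0, ∃ col : ι → Fin (n + 1),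
      IsScaleColoring col s (c * s) g {x ∈ A | j x = i}) :
    LinearlyColorable n g A := by
  classical
  obtain ⟨hR, hK, hg⟩ := id h
  refine ⟨max K c, lt_max_of_lt_left hK, fun s hs => ?_⟩
  choose col hcol using fun i => hshell i s hs
  let level : ι → Option σ := fun x => if R (j x) ≤ s then none else some (j x)
  refine ⟨fun x => col (j x) x, .of_fibers level (fun i => ?_) fun x hx y hy _ hd => ?_⟩
  · rcases i with _ | i
    · refine .of_dist_le _ ?_
      have hlow : ∀ x, level x = none → R (j x) ≤ s := fun x hx => by
        by_contra hlt
        simp [level, hlt] at hx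
      rintro x ⟨hx, hx'⟩ y ⟨hy, hy'⟩
      refine (h.dist_le_mul hx hy (hlow x hx') (hlow y hy')).trans ?_
      gcongr
      exact le_max_left K c
    · have hlevel : ∀ x ∈ {x ∈ A | level x = some i}, j x = i := fun x ⟨_, hx⟩ => by
        by_contra hne
        simp [level, hne] at hx
      refine (hcol i).comap id (fun x hx => ⟨hx.1, hlevel x hx⟩)
        (fun x hx => congrArg (col · x) (hlevel x hx)) (fun _ _ _ _ hd => hd)
        (fun _ _ _ _ hd => hd.trans ?_)
      gcongr
      exact le_max_right K c
  · have hfar : ∀ x ∈ A, ∀ y ∈ A, dist (g x) (g y) ≤ s → j x < j y → level x = level y := by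
      intro x hx y hy hd hlt
      have hy' : R (j y) ≤ s := ((hg x hx y hy).1 hlt).trans hd
      simp [level, hy', (hR hlt.le).trans hy']
    rcases lt_trichotomy (j x) (j y) with hlt | heq | hlt
    · exact hfar x hx y hy hd hlt
    · simp only [level, heq]
    · exact (hfar y hy x hx (by rwa [dist_comm]) hlt).symm

end IsShellDecomposition

/-- On subsets of `S`, being linearly colorable means the same for the metrics pulled back along `g`
and `g'`; passing to subsets makes the relation stable under finite unions. -/
def NagataEquivOn (g : ι → X) (g' : ι → Y) (S : Set ι) : Prop :=
  ∀ n, ∀ A ⊆ S, LinearlyColorable n g A ↔ LinearlyColorable n g' A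

namespace NagataEquivOn

lemma mono (h : NagataEquivOn g g' T) (hST : S ⊆ T) : NagataEquivOn g g' S :=
  fun n A hA => h n A (hA.trans hST)

lemma of_subsingleton (g : ι → X) (g' : ι → Y) (hS : S.Subsingleton) : NagataEquivOn g g' S :=
  fun n _ hA => iff_of_true (.of_subsingleton n g (hS.anti hA)) (.of_subsingleton n g' (hS.anti hA))

lemma union (hS : NagataEquivOn g g' S) (hT : NagataEquivOn g g' T) :
    NagataEquivOn g g' (S ∪ T) := by
  intro n A hA
  have hsplit : A = A ∩ S ∪ A ∩ T := by rw [← inter_union_distrib_left, inter_eq_left.2 hA]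
  have hAS := hS n _ (inter_subset_right (s := A))
  have hAT := hT n _ (inter_subset_right (s := A))
  constructor <;> intro h <;> rw [hsplit]
  · exact (hAS.1 (h.mono inter_subset_left)).union (hAT.1 (h.mono inter_subset_left))
  · exact (hAS.2 (h.mono inter_subset_left)).union (hAT.2 (h.mono inter_subset_left))

end NagataEquivOn

-- Color the shell `i` for `g` at the rescaled scale `K₁ * s / w i`: the resulting constant does
-- not depend on the shell.
lemma LinearlyColorable.of_dilation_on_shells (hA : LinearlyColorable n g A) {R w : σ → ℝ}
    {K K₁ K₂ : ℝ} (hg' : IsShellDecomposition j R K g' A) (hw : ∀ i, 0 < w i) (hK₁ : 0 < K₁)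
    (hK₂ : 0 ≤ K₂)
    (hlo : ∀ x ∈ A, ∀ y ∈ A, j x = j y → w (j y) * dist (g x) (g y) ≤ K₁ * dist (g' x) (g' y))
    (hup : ∀ x ∈ A, ∀ y ∈ A, j x = j y → dist (g' x) (g' y) ≤ K₂ * (w (j y) * dist (g x) (g y))) :
    LinearlyColorable n g' A := by
  obtain ⟨c, hc, h⟩ := hA
  refine hg'.linearlyColorable (c := K₂ * (c * K₁)) fun i s hs => ?_
  have hwi := hw i
  obtain ⟨col, hcol⟩ := h (K₁ * s / w i) (by positivity)
  refine ⟨col, hcol.comap id (fun x hx => hx.1) (fun _ _ => rfl) ?_ ?_⟩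
  · rintro x ⟨hx, rfl⟩ y ⟨hy, hxy⟩ hd
    rw [id, id, le_div_iff₀' hwi, ← hxy]
    exact (hlo x hx y hy hxy.symm).trans (by gcongr)
  · rintro x ⟨hx, rfl⟩ y ⟨hy, hxy⟩ hd
    calc dist (g' x) (g' y)
      _ ≤ K₂ * (w (j x) * dist (g x) (g y)) := hxy ▸ hup x hx y hy hxy.symm
      _ ≤ K₂ * (w (j x) * (c * (K₁ * s / w (j x)))) := by gcongr; exact hd
      _ = K₂ * (c * K₁) * s := by field_simp

section Dilation

variable {R w : σ → ℝ} {K C₁ C₂ : ℝ}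

lemma IsShellDecomposition.of_dilation (hg : IsShellDecomposition j R K g S) (hR : ∀ i, 0 ≤ R i)
    (hw : Monotone w) (hw_pos : ∀ i, 0 < w i) (hC₁ : 0 < C₁) (hC₂ : 0 < C₂)
    (hlo : ∀ x ∈ S, ∀ y ∈ S, j x ≤ j y →
      C₁ * (w (j y) * dist (g x) (g y)) ≤ dist (g' x) (g' y))
    (hup : ∀ x ∈ S, ∀ y ∈ S, j x ≤ j y →
      dist (g' x) (g' y) ≤ C₂ * (w (j y) * dist (g x) (g y))) :
    IsShellDecomposition j (fun i => C₁ * (w i * R i)) (C₂ * K / C₁) g' S := by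
  obtain ⟨hRmono, hK, h⟩ := hg
  refine ⟨fun i i' hii' => ?_, by positivity, fun x hx y hy => ⟨fun hlt => ?_, fun hle => ?_⟩⟩
  · have := hRmono hii'
    have := hw hii'
    have := hR i
    have := hw_pos i'
    dsimp only
    gcongr
  · have := hw_pos (j y)
    calc C₁ * (w (j y) * R (j y)) ≤ C₁ * (w (j y) * dist (g x) (g y)) := by
          gcongr
          exact (h x hx y hy).1 hlt
      _ ≤ dist (g' x) (g' y) := hlo x hx y hy hlt.le
  · have := hw_pos (j y)
    calc dist (g' x) (g' y) ≤ C₂ * (w (j y) * dist (g x) (g y)) := hup x hx y hy hle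
      _ ≤ C₂ * (w (j y) * (K * R (j y))) := by gcongr; exact (h x hx y hy).2 hle
      _ = C₂ * K / C₁ * (C₁ * (w (j y) * R (j y))) := by field_simp

lemma NagataEquivOn.of_dilation (hg : IsShellDecomposition j R K g S) (hR : ∀ i, 0 ≤ R i)
    (hw : Monotone w) (hw_pos : ∀ i, 0 < w i) (hC₁ : 0 < C₁) (hC₂ : 0 < C₂)
    (hlo : ∀ x ∈ S, ∀ y ∈ S, j x ≤ j y →
      C₁ * (w (j y) * dist (g x) (g y)) ≤ dist (g' x) (g' y))
    (hup : ∀ x ∈ S, ∀ y ∈ S, j x ≤ j y →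
      dist (g' x) (g' y) ≤ C₂ * (w (j y) * dist (g x) (g y))) :
    NagataEquivOn g g' S := by
  have hg' := hg.of_dilation hR hw hw_pos hC₁ hC₂ hlo hup
  refine fun n A hA => ⟨fun h => ?_, fun h => ?_⟩
  · refine h.of_dilation_on_shells (hg'.mono hA) hw_pos (inv_pos.2 hC₁) hC₂.le
      (fun x hx y hy hxy => ?_) (fun x hx y hy hxy => hup x (hA hx) y (hA hy) hxy.le)
    rw [le_inv_mul_iff₀ hC₁]
    exact hlo x (hA hx) y (hA hy) hxy.le
  · refine h.of_dilation_on_shells (hg.mono hA) (w := fun i => (w i)⁻¹)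
      (fun i => inv_pos.2 (hw_pos i)) hC₂ (inv_pos.2 hC₁).le
      (fun x hx y hy hxy => ?_) (fun x hx y hy hxy => ?_)
    · rw [inv_mul_le_iff₀ (hw_pos _), mul_left_comm]
      exact hup x (hA hx) y (hA hy) hxy.le
    · rw [le_inv_mul_iff₀ hC₁, le_inv_mul_iff₀ (hw_pos _), mul_left_comm]
      exact hlo x (hA hx) y (hA hy) hxy.le

end Dilation

end Shells

section PowerDistortion

variable {m : ℕ} {f : X → Y} {z : X} {S T : Set X}

/-- On `S`, the map `f` changes distances as `w ↦ (w - z) ^ (m + 1)` does on a thin sector with apex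
`z`: by the factor `r ^ m`, up to constants, where `r` is the larger distance to `z`. -/
def HasPowerDistortion (f : X → Y) (z : X) (m : ℕ) (S : Set X) : Prop :=
  ∃ C₁ > 0, ∃ C₂ > 0, ∀ x ∈ S, ∀ y ∈ S,
    C₁ * (max (dist x z) (dist y z) ^ m * dist x y) ≤ dist (f x) (f y) ∧
      dist (f x) (f y) ≤ C₂ * (max (dist x z) (dist y z) ^ m * dist x y)

lemma HasPowerDistortion.mono (h : HasPowerDistortion f z m T) (hST : S ⊆ T) :
    HasPowerDistortion f z m S := by
  obtain ⟨C₁, hC₁, C₂, hC₂, h⟩ := h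
  exact ⟨C₁, hC₁, C₂, hC₂, fun x hx y hy => h x (hST hx) y (hST hy)⟩

/-- The index of the dyadic annulus about `z` that contains `x`, with the junk value `0` if
`dist x z = 0`. -/
noncomputable def dyadicLevel (z x : X) : ℤ := Int.log 2 (dist x z)

lemma zpow_dyadicLevel_le {x : X} (hx : 0 < dist x z) : 2 ^ dyadicLevel z x ≤ dist x z := by
  exact_mod_cast Int.zpow_log_le_self one_lt_two hx

lemma dist_lt_zpow_dyadicLevel_add_one (z x : X) : dist x z < 2 ^ (dyadicLevel z x + 1) := by
  exact_mod_cast Int.lt_zpow_succ_log_self one_lt_two (dist x z)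

-- A skipped annulus between any two occupied ones keeps the latter at a distance from each other.
lemma isShellDecomposition_dyadicLevel (hz : ∀ x ∈ S, 0 < dist x z)
    (hgap : ∀ x ∈ S, ∀ y ∈ S, dyadicLevel z x < dyadicLevel z y →
      dyadicLevel z x + 2 ≤ dyadicLevel z y) :
    IsShellDecomposition (dyadicLevel z) (fun i => 2 ^ i / 2) 8 id S := by
  have hmono : Monotone fun i : ℤ => (2 : ℝ) ^ i := zpow_right_mono₀ one_le_two
  refine ⟨fun i i' hii' => div_le_div_of_nonneg_right (hmono hii') zero_le_two, by norm_num,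
    fun x hx y hy => ⟨fun hlt => ?_, fun hle => ?_⟩⟩
  · have hx' := dist_lt_zpow_dyadicLevel_add_one z x
    have hy' := zpow_dyadicLevel_le (hz y hy)
    have hxy : (2 : ℝ) ^ (dyadicLevel z x + 1 + 1) ≤ 2 ^ dyadicLevel z y :=
      hmono (by linarith [hgap x hx y hy hlt])
    rw [zpow_add_one₀ two_ne_zero] at hxy
    simp only [id]
    linarith [dist_triangle_left y z x]
  · have hx' := dist_lt_zpow_dyadicLevel_add_one z x
    have hy' := dist_lt_zpow_dyadicLevel_add_one z y
    rw [zpow_add_one₀ two_ne_zero] at hx' hy'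
    have hxy : (2 : ℝ) ^ dyadicLevel z x ≤ 2 ^ dyadicLevel z y := hmono hle
    simp only [id]
    linarith [dist_triangle_right x y z]

namespace HasPowerDistortion

lemma nagataEquivOn_of_gaps (h : HasPowerDistortion f z m S) (hz : ∀ x ∈ S, 0 < dist x z)
    (hgap : ∀ x ∈ S, ∀ y ∈ S, dyadicLevel z x < dyadicLevel z y →
      dyadicLevel z x + 2 ≤ dyadicLevel z y) :
    NagataEquivOn id f S := by
  obtain ⟨C₁, hC₁, C₂, hC₂, h⟩ := h
  have hmono : Monotone fun i : ℤ => (2 : ℝ) ^ i := zpow_right_mono₀ one_le_two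
  refine .of_dilation (isShellDecomposition_dyadicLevel hz hgap) (fun i => by positivity)
    (w := fun i => (2 ^ i) ^ m) (C₂ := C₂ * 2 ^ m)
    (fun i i' hii' => pow_le_pow_left₀ (by positivity) (hmono hii') m) (fun i => by positivity)
    hC₁ (by positivity) (fun x hx y hy _ => ?_) (fun x hx y hy hle => ?_)
  · refine le_trans ?_ (h x hx y hy).1
    simp only [id]
    gcongr
    exact (zpow_dyadicLevel_le (hz y hy)).trans (le_max_right _ _)
  · have hmax : max (dist x z) (dist y z) ≤ 2 * 2 ^ dyadicLevel z y := by
      rw [← zpow_one_add₀ two_ne_zero, add_comm]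
      exact max_le ((dist_lt_zpow_dyadicLevel_add_one z x).le.trans (hmono (by linarith)))
        (dist_lt_zpow_dyadicLevel_add_one z y).le
    calc dist (f x) (f y) ≤ C₂ * (max (dist x z) (dist y z) ^ m * dist x y) := (h x hx y hy).2
      _ ≤ C₂ * ((2 * 2 ^ dyadicLevel z y) ^ m * dist x y) := by gcongr
      _ = C₂ * 2 ^ m * ((2 ^ dyadicLevel z y) ^ m * dist x y) := by rw [mul_pow]; ring

lemma nagataEquivOn (h : HasPowerDistortion f z m S) (hz : ∀ x ∈ S, 0 < dist x z) :
    NagataEquivOn id f S := by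
  have hparity : ∀ e, NagataEquivOn id f {x ∈ S | dyadicLevel z x % 2 = e} := fun e => by
    refine (h.mono (sep_subset S _)).nagataEquivOn_of_gaps (fun x hx => hz x hx.1) ?_
    rintro x ⟨-, hx⟩ y ⟨-, hy⟩ hlt
    omega
  refine ((hparity 0).union (hparity 1)).mono fun x hx => ?_
  exact (Int.emod_two_eq_zero_or_one (dyadicLevel z x)).imp (⟨hx, ·⟩) (⟨hx, ·⟩)

end HasPowerDistortion

end PowerDistortion

section Powers

lemma norm_pow_sub_pow_le {R : Type*} [SeminormedCommRing R] [NormOneClass R] (x y : R) (n : ℕ) :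
    ‖x ^ n - y ^ n‖ ≤ n * max ‖x‖ ‖y‖ ^ (n - 1) * ‖x - y‖ := by
  rw [← geom_sum₂_mul]
  refine (norm_mul_le _ _).trans (mul_le_mul_of_nonneg_right ?_ (norm_nonneg _))
  have hterm : ∀ i ∈ Finset.range n, ‖x ^ i * y ^ (n - 1 - i)‖ ≤ max ‖x‖ ‖y‖ ^ (n - 1) := by
    intro i hi
    calc ‖x ^ i * y ^ (n - 1 - i)‖ ≤ ‖x‖ ^ i * ‖y‖ ^ (n - 1 - i) :=
          (norm_mul_le _ _).trans (by gcongr <;> exact norm_pow_le _ _)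
      _ ≤ max ‖x‖ ‖y‖ ^ i * max ‖x‖ ‖y‖ ^ (n - 1 - i) := by
          gcongr
          exacts [le_max_left _ _, le_max_right _ _]
      _ = max ‖x‖ ‖y‖ ^ (n - 1) := by
          rw [← pow_add, Nat.add_sub_cancel' (Nat.le_sub_one_of_lt (Finset.mem_range.1 hi))]
  simpa using norm_sum_le_of_le _ hterm

lemma norm_pow_mul_pow_sub_pow_le {R : Type*} [SeminormedCommRing R] [NormOneClass R] {a b u : R}
    {δ : ℝ} (ha : ‖a‖ ≤ 1) (hb : ‖b‖ ≤ 1) (hu : ‖u‖ ≤ 1) (hau : ‖a - u‖ ≤ δ) (hbu : ‖b - u‖ ≤ δ)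
    (i k : ℕ) : ‖a ^ i * b ^ k - u ^ (i + k)‖ ≤ (i + k : ℕ) * δ := by
  have hpow : ∀ c : R, ‖c‖ ≤ 1 → ‖c - u‖ ≤ δ → ∀ l : ℕ, ‖c ^ l - u ^ l‖ ≤ l * δ :=
    fun c hc hcu l =>
    calc ‖c ^ l - u ^ l‖ ≤ l * max ‖c‖ ‖u‖ ^ (l - 1) * ‖c - u‖ := norm_pow_sub_pow_le c u l
      _ ≤ l * 1 * δ := by
        gcongr
        exact pow_le_one₀ (by positivity) (max_le hc hu)
      _ = l * δ := by rw [mul_one]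
  have hpow_one : ∀ c : R, ‖c‖ ≤ 1 → ∀ l : ℕ, ‖c ^ l‖ ≤ 1 := fun c hc l =>
    (norm_pow_le c l).trans (pow_le_one₀ (norm_nonneg c) hc)
  calc ‖a ^ i * b ^ k - u ^ (i + k)‖ = ‖(a ^ i - u ^ i) * b ^ k + u ^ i * (b ^ k - u ^ k)‖ := by
        congr 1; ring
    _ ≤ ‖a ^ i - u ^ i‖ * ‖b ^ k‖ + ‖u ^ i‖ * ‖b ^ k - u ^ k‖ :=
        (norm_add_le _ _).trans (add_le_add (norm_mul_le _ _) (norm_mul_le _ _))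
    _ ≤ i * δ * 1 + 1 * (k * δ) := by
        have hδ : 0 ≤ δ := (norm_nonneg _).trans hau
        gcongr
        exacts [hpow a ha hau i, hpow_one b hb k, hpow_one u hu i, hpow b hb hbu k]
    _ = (i + k : ℕ) * δ := by push_cast; ring

lemma le_norm_sum_smul_of_norm_sub_le {E α : Type*} [SeminormedAddCommGroup E] [NormedSpace ℝ E]
    {s : Finset α} {t : α → ℝ} {v : α → E} {e : E} {ε : ℝ} (ht : ∀ i ∈ s, 0 ≤ t i)
    (hv : ∀ i ∈ s, ‖v i - e‖ ≤ ε) :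
    (‖e‖ - ε) * ∑ i ∈ s, t i ≤ ‖∑ i ∈ s, t i • v i‖ := by
  have herr : ‖∑ i ∈ s, t i • v i - (∑ i ∈ s, t i) • e‖ ≤ (∑ i ∈ s, t i) * ε := by
    rw [Finset.sum_smul, ← Finset.sum_sub_distrib, Finset.sum_mul]
    refine norm_sum_le_of_le _ fun i hi => ?_
    rw [← smul_sub, norm_smul, Real.norm_of_nonneg (ht i hi)]
    exact mul_le_mul_of_nonneg_left (hv i hi) (ht i hi)
  have hmain : ‖(∑ i ∈ s, t i) • e‖ = (∑ i ∈ s, t i) * ‖e‖ := by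
    rw [norm_smul, Real.norm_of_nonneg (Finset.sum_nonneg ht)]
  linarith [norm_le_norm_add_norm_sub (∑ i ∈ s, t i • v i) ((∑ i ∈ s, t i) • e)]

-- In `x ^ (m + 1) - y ^ (m + 1) = (∑ x ^ i * y ^ (m - i)) * (x - y)`, all summands point nearly in
-- the direction `u ^ m`, so that no cancellation occurs.
lemma le_norm_pow_sub_pow_of_sector {𝕜 : Type*} [RCLike 𝕜] {x y u : 𝕜} {m : ℕ} {δ : ℝ}
    (hu : ‖u‖ = 1) (hδ : m * δ ≤ 1 / 2) (hx : ‖NormedSpace.normalize x - u‖ ≤ δ)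
    (hy : ‖NormedSpace.normalize y - u‖ ≤ δ) :
    1 / 2 * (max ‖x‖ ‖y‖ ^ m * ‖x - y‖) ≤ ‖x ^ (m + 1) - y ^ (m + 1)‖ := by
  set a := NormedSpace.normalize x
  set b := NormedSpace.normalize y
  have hnorm : ∀ w : 𝕜, ‖NormedSpace.normalize w‖ ≤ 1 := fun w => by
    by_cases hw : w = 0
    · simp [hw]
    · exact (NormedSpace.norm_normalize_eq_one_iff.2 hw).le
  have hterm : ∀ i, x ^ i * y ^ (m - i) = (‖x‖ ^ i * ‖y‖ ^ (m - i)) • (a ^ i * b ^ (m - i)) := by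
    intro i
    rw [← smul_mul_smul_comm, ← smul_pow, ← smul_pow, NormedSpace.norm_smul_normalize,
      NormedSpace.norm_smul_normalize]
  have hdir : ∀ i ∈ Finset.range (m + 1), ‖a ^ i * b ^ (m - i) - u ^ m‖ ≤ 1 / 2 := by
    intro i hi
    have him : i + (m - i) = m := Nat.add_sub_cancel' (Finset.mem_range_succ_iff.1 hi)
    have := norm_pow_mul_pow_sub_pow_le (hnorm x) (hnorm y) hu.le hx hy i (m - i)
    rw [him] at this
    exact this.trans hδ
  have hmax : max ‖x‖ ‖y‖ ^ m ≤ ∑ i ∈ Finset.range (m + 1), ‖x‖ ^ i * ‖y‖ ^ (m - i) := by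
    have hle := fun i (hi : i ∈ Finset.range (m + 1)) =>
      Finset.single_le_sum (f := fun i => ‖x‖ ^ i * ‖y‖ ^ (m - i)) (fun i _ => by positivity) hi
    rcases max_choice ‖x‖ ‖y‖ with h | h <;> rw [h]
    · simpa using hle m (by simp)
    · simpa using hle 0 (by simp)
  have hsum := le_norm_sum_smul_of_norm_sub_le
    (t := fun i => ‖x‖ ^ i * ‖y‖ ^ (m - i)) (fun i _ => by positivity) hdir
  rw [norm_pow, hu, one_pow] at hsum
  rw [← geom_sum₂_mul, norm_mul, ← mul_assoc, Nat.add_sub_cancel]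
  gcongr
  simp only [hterm]
  linarith

end Powers

section Analytic

variable {𝕜 F : Type*} [RCLike 𝕜] [NormedAddCommGroup F] [NormedSpace 𝕜 F]
  {f : 𝕜 → F} {z : 𝕜} {m : ℕ} {r : ℝ}

lemma eventually_eq_of_eventually_deriv_eq_zero (hf : ∀ᶠ w in 𝓝 z, DifferentiableAt 𝕜 f w)
    (hd : ∀ᶠ w in 𝓝 z, deriv f w = 0) : ∀ᶠ w in 𝓝 z, f w = f z := by
  obtain ⟨r, hr, hball⟩ := eventually_nhds_iff_ball.1 (hf.and hd)
  filter_upwards [ball_mem_nhds z hr] with w hw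
  exact isOpen_ball.is_const_of_deriv_eq_zero (convex_ball z r).isPreconnected
    (fun v hv => (hball v hv).1.differentiableWithinAt) (fun v hv => (hball v hv).2) hw
    (mem_ball_self hr)

/-- On `S`, the increments of `f` are those of `w ↦ (w - z) ^ (m + 1) • a`, up to an `ε`-fraction of
the size of the latter. -/
def IsMonomialApprox (f : 𝕜 → F) (z : 𝕜) (m : ℕ) (a : F) (ε : ℝ) (S : Set 𝕜) : Prop :=
  ∀ x ∈ S, ∀ y ∈ S, ‖f x - f y - ((x - z) ^ (m + 1) - (y - z) ^ (m + 1)) • a‖ ≤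
    ε * (max (dist x z) (dist y z) ^ m * dist x y)

lemma isMonomialApprox_ball_of_deriv {H : 𝕜 → F} {a : F} {ε : ℝ}
    (hf : ∀ w ∈ ball z r, DifferentiableAt 𝕜 f w)
    (hderiv : ∀ w ∈ ball z r, deriv f w = (w - z) ^ m • H w)
    (hH : ∀ w ∈ ball z r, ‖H w - (m + 1 : 𝕜) • a‖ ≤ ε) :
    IsMonomialApprox f z m a ε (ball z r) := by
  intro x hx y hy
  set ρ := max (dist x z) (dist y z)
  have hsub : closedBall z ρ ⊆ ball z r := closedBall_subset_ball (max_lt hx hy)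
  have hmonomial : ∀ w, HasDerivAt (fun w => (w - z) ^ (m + 1) • a)
      ((w - z) ^ m • (m + 1 : 𝕜) • a) w := fun w => by
    simpa [smul_smul, mul_comm] using
      (((hasDerivAt_id w).sub_const z).fun_pow (m + 1)).smul_const a
  have hdiff : ∀ w ∈ closedBall z ρ,
      HasDerivAt (fun w => f w - (w - z) ^ (m + 1) • a) ((w - z) ^ m • (H w - (m + 1 : 𝕜) • a)) w :=
    fun w hw => by
      rw [smul_sub, ← hderiv w (hsub hw)]
      exact (hf w (hsub hw)).hasDerivAt.fun_sub (hmonomial w)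
  have hmean := (convex_closedBall z ρ).norm_image_sub_le_of_norm_hasDerivWithin_le
    (C := ρ ^ m * ε) (fun w hw => (hdiff w hw).hasDerivWithinAt) (fun w hw => ?_)
    (mem_closedBall.2 (le_max_right _ _) : y ∈ closedBall z ρ) (mem_closedBall.2 (le_max_left _ _))
  · calc _ = ‖f x - (x - z) ^ (m + 1) • a - (f y - (y - z) ^ (m + 1) • a)‖ := by
          rw [sub_smul, sub_sub_sub_comm]
      _ ≤ ρ ^ m * ε * ‖x - y‖ := hmean
      _ = ε * (ρ ^ m * dist x y) := by rw [dist_eq_norm x y]; ring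
  · rw [norm_smul, norm_pow, ← dist_eq_norm]
    gcongr
    exacts [hw, hH w (hsub hw)]

lemma exists_isMonomialApprox_ball [CompleteSpace F] (hf : AnalyticAt 𝕜 f z)
    (hnc : ¬ ∀ᶠ w in 𝓝 z, f w = f z) :
    ∃ (m : ℕ) (a : F), a ≠ 0 ∧ ∀ ε > 0, ∃ r > 0, IsMonomialApprox f z m a ε (ball z r) := by
  have hdiff : ∀ᶠ w in 𝓝 z, DifferentiableAt 𝕜 f w :=
    hf.eventually_analyticAt.mono fun w hw => hw.differentiableAt
  obtain ⟨m, H, hH, hHz, hderiv⟩ : ∃ (m : ℕ) (H : 𝕜 → F), AnalyticAt 𝕜 H z ∧ H z ≠ 0 ∧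
      ∀ᶠ w in 𝓝 z, deriv f w = (w - z) ^ m • H w :=
    hf.deriv.exists_eventuallyEq_pow_smul_nonzero_iff.2 fun hd =>
      hnc (eventually_eq_of_eventually_deriv_eq_zero hdiff hd)
  have hm : (m + 1 : 𝕜) ≠ 0 := Nat.cast_add_one_ne_zero m
  refine ⟨m, (m + 1 : 𝕜)⁻¹ • H z, smul_ne_zero (inv_ne_zero hm) hHz, fun ε hε => ?_⟩
  have hclose : ∀ᶠ w in 𝓝 z, ‖H w - H z‖ ≤ ε := by
    filter_upwards [hH.continuousAt.eventually_mem (closedBall_mem_nhds (H z) hε)] with w hw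
    rwa [mem_closedBall, dist_eq_norm] at hw
  obtain ⟨r, hr, hball⟩ := eventually_nhds_iff_ball.1 (hdiff.and (hderiv.and hclose))
  refine ⟨r, hr, isMonomialApprox_ball_of_deriv (fun w hw => (hball w hw).1)
    (fun w hw => (hball w hw).2.1) fun w hw => ?_⟩
  rw [smul_inv_smul₀ hm]
  exact (hball w hw).2.2

lemma IsMonomialApprox.hasPowerDistortion_of_sector {a : F} {ε δ : ℝ} {u : 𝕜} {S : Set 𝕜}
    (h : IsMonomialApprox f z m a ε S) (ha : a ≠ 0) (hε : ε < ‖a‖ / 2) (hu : ‖u‖ = 1)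
    (hδ : m * δ ≤ 1 / 2) (hsector : ∀ x ∈ S, ‖NormedSpace.normalize (x - z) - u‖ ≤ δ) :
    HasPowerDistortion f z m S := by
  have ha' : 0 < ‖a‖ := norm_pos_iff.2 ha
  refine ⟨‖a‖ / 2 - ε, sub_pos.2 hε, (m + 1) * ‖a‖ + ‖a‖ / 2, by positivity, fun x hx y hy => ?_⟩
  set p := (x - z) ^ (m + 1) - (y - z) ^ (m + 1)
  set Q := max (dist x z) (dist y z) ^ m * dist x y with hQ
  have hQ_nonneg : 0 ≤ Q := by positivity
  have happrox : ‖f x - f y - p • a‖ ≤ ε * Q := h x hx y hy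
  have hlo : 1 / 2 * Q ≤ ‖p‖ := by
    simpa only [hQ, dist_eq_norm, sub_sub_sub_cancel_right] using
      le_norm_pow_sub_pow_of_sector hu hδ (hsector x hx) (hsector y hy)
  have hup : ‖p‖ ≤ (m + 1) * Q := by
    simpa only [hQ, dist_eq_norm, sub_sub_sub_cancel_right, Nat.add_sub_cancel, Nat.cast_add_one,
      mul_assoc] using norm_pow_sub_pow_le (x - z) (y - z) (m + 1)
  rw [dist_eq_norm (f x)]
  constructor
  · calc (‖a‖ / 2 - ε) * Q = 1 / 2 * Q * ‖a‖ - ε * Q := by ring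
      _ ≤ ‖p • a‖ - ‖f x - f y - p • a‖ := by rw [norm_smul]; gcongr
      _ ≤ ‖f x - f y‖ := by linarith [norm_le_norm_add_norm_sub (f x - f y) (p • a)]
  · calc ‖f x - f y‖ ≤ ‖p • a‖ + ‖f x - f y - p • a‖ := norm_le_norm_add_norm_sub' _ _
      _ ≤ (m + 1) * Q * ‖a‖ + ‖a‖ / 2 * Q := by
          rw [norm_smul]
          exact add_le_add (by gcongr) (happrox.trans (by gcongr))
      _ = ((m + 1) * ‖a‖ + ‖a‖ / 2) * Q := by ring

lemma exists_nagataEquivOn_ball [CompleteSpace F] (hf : AnalyticAt 𝕜 f z)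
    (hnc : ¬ ∀ᶠ w in 𝓝 z, f w = f z) : ∃ r > 0, NagataEquivOn id f (ball z r) := by
  obtain ⟨m, a, ha, happrox⟩ := exists_isMonomialApprox_ball hf hnc
  have ha' : 0 < ‖a‖ := norm_pos_iff.2 ha
  obtain ⟨r, hr, hball⟩ := happrox (‖a‖ / 4) (by positivity)
  let sector : Set 𝕜 → Set 𝕜 := fun U => {w ∈ ball z r | w ≠ z ∧ NormedSpace.normalize (w - z) ∈ U}
  have hsectors : NagataEquivOn id f (sector (sphere 0 1)) := by
    refine (isCompact_sphere (0 : 𝕜) 1).induction_on (p := fun U => NagataEquivOn id f (sector U))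
      (.of_subsingleton id f fun w hw => hw.2.2.elim)
      (fun U V hUV hV => hV.mono fun w hw => ⟨hw.1, hw.2.1, hUV hw.2.2⟩)
      (fun U V hU hV => (hU.union hV).mono fun w hw =>
        hw.2.2.imp (⟨hw.1, hw.2.1, ·⟩) (⟨hw.1, hw.2.1, ·⟩)) fun u hu => ?_
    have hδ : (0 : ℝ) < 1 / (2 * (m + 1)) := by positivity
    refine ⟨_, mem_nhdsWithin_of_mem_nhds (closedBall_mem_nhds u hδ), ?_⟩
    have hdist : HasPowerDistortion f z m (sector (closedBall u (1 / (2 * (m + 1))))) := by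
      refine IsMonomialApprox.hasPowerDistortion_of_sector
        (fun x hx y hy => hball x hx.1 y hy.1) ha (by linarith) (mem_sphere_zero_iff_norm.1 hu) ?_
        fun x hx => mem_closedBall_iff_norm.1 hx.2.2
      rw [mul_one_div, div_le_div_iff₀ (by positivity) two_pos]
      linarith
    exact hdist.nagataEquivOn fun x hx => dist_pos.2 hx.2.1
  have hcenter : NagataEquivOn id f {z} := .of_subsingleton id f subsingleton_singleton
  refine ⟨r, hr, (hcenter.union hsectors).mono fun w hw => ?_⟩
  by_cases hwz : w = z
  · exact .inl hwz
  · exact .inr ⟨hw, hwz, mem_sphere_zero_iff_norm.2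
      (NormedSpace.norm_normalize_eq_one_iff.2 (sub_ne_zero.2 hwz))⟩

end Analytic

theorem holomorphic_preserves_nagataDim_compact_general {𝕜 F : Type*} [RCLike 𝕜]
    [NormedAddCommGroup F] [NormedSpace 𝕜 F] [CompleteSpace F] {Ω : Set 𝕜} (hΩ : IsPreconnected Ω)
    {f : 𝕜 → F} (hf : AnalyticOnNhd 𝕜 f Ω) (hnc : ¬ ∃ w, ∀ z ∈ Ω, f z = w) {E : Set 𝕜}
    (hE : E ⊆ Ω) (hEc : IsCompact E) : nagataDim E = nagataDim (f '' E) := by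
  have hlocal : ∀ z ∈ Ω, ∃ r > 0, NagataEquivOn id f (ball z r) := fun z hz =>
    exists_nagataEquivOn_ball (hf z hz) fun hconst =>
      hnc ⟨f z, hf.eqOn_of_preconnected_of_eventuallyEq analyticOnNhd_const hΩ hz hconst⟩
  have hcompact : NagataEquivOn id f E := by
    refine hEc.induction_on (.of_subsingleton id f subsingleton_empty)
      (fun S T hST hT => hT.mono hST) (fun S T hS hT => hS.union hT) fun z hz => ?_
    obtain ⟨r, hr, h⟩ := hlocal z (hE hz)
    exact ⟨ball z r, mem_nhdsWithin_of_mem_nhds (ball_mem_nhds z hr), h⟩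
  rw [nagataDim_eq_sInf, nagataDim_image]
  simp only [hcompact _ E Subset.rfl]

/-- **Statement 14.** A non-constant holomorphic function on a planar domain preserves
the Nagata dimension of every compact subset of the domain. -/
theorem holomorphic_preserves_nagataDim_compact (Ω : Set ℂ) (hΩo : IsOpen Ω)
    (hΩc : IsConnected Ω) (f : ℂ → ℂ) (hf : DifferentiableOn ℂ f Ω)
    (hnc : ¬ ∃ w : ℂ, ∀ z ∈ Ω, f z = w)
    (E : Set ℂ) (hE : E ⊆ Ω) (hEc : IsCompact E) :
    nagataDim E = nagataDim (f '' E) :=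
  holomorphic_preserves_nagataDim_compact_general hΩc.isPreconnected (hf.analyticOnNhd hΩo)
    hnc hE hEc
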